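/- Let u, v be positive harmonic functions on the upper half-plane ℍ, both extending continuously to an open interval γ ⊆ ℝ with u = v = 0 on γ. Then for every x ∈ γ the limit lim_{y → 0⁺} u(x, y)/v(x, y) exists, is finite and strictly positive, and equals u*_y(x, 0)/v*_y(x, 0), where u*, v* are the odd harmonic reflections across γ. Moreover the function h(x) = u*_y(x,0)/v*_y(x,0) is real analytic on γ. -/

import Mathlib

open Complex Metric Set Filter Topology

local notation "conj'" => starRingEnd ℂ

def HarmonicOnSet (u : ℂ → ℝ) (s : Set ℂ) : Prop :=
  ContinuousOn u s ∧ ∀ z ∈ s, ∀ ρ > (0 : ℝ), Metric.closedBall z ρ ⊆ s →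
    u z = (2 * Real.pi)⁻¹ *
      ∫ t in (0 : ℝ)..(2 * Real.pi), u (z + (ρ : ℂ) * Complex.exp ((t : ℂ) * Complex.I))

def UHP : Set ℂ := {z : ℂ | 0 < z.im}

noncomputable def oddReflection (v : ℂ → ℝ) (z : ℂ) : ℝ :=
  if 0 < z.im then v z else if z.im < 0 then -v (conj' z) else 0


theorem aux_max (f : ℂ → ℝ) (c : ℂ) (R M : ℝ) (hR : 0 < R)
    (hf : ContinuousOn f (closedBall c R))
    (hm : ∀ z ∈ ball c R, ∃ ε > 0, ∀ ρ, 0 < ρ → ρ < ε → Real.circleAverage f z ρ = f z)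
    (hM : ∀ z ∈ sphere c R, f z ≤ M) : ∀ z ∈ closedBall c R, f z ≤ M := by
  obtain ⟨z0, hz0, hmax⟩ := (isCompact_closedBall c R).exists_isMaxOn
    ⟨c, mem_closedBall_self hR.le⟩ hf
  have hK : IsCompact (closedBall c R ∩ f ⁻¹' {f z0}) :=
    (isCompact_closedBall c R).of_isClosed_subset
      (hf.preimage_isClosed_of_isClosed isClosed_closedBall isClosed_singleton) inter_subset_left
  obtain ⟨z1, ⟨hz1, hz1'⟩, hre⟩ := hK.exists_isMaxOn ⟨z0, hz0, rfl⟩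
    (Complex.continuous_re.continuousOn)
  simp only [mem_preimage, mem_singleton_iff] at hz1'
  have key : f z1 ≤ M := by
    by_cases hs : z1 ∈ ball c R
    · exfalso
      obtain ⟨ε, hε, hav⟩ := hm z1 hs
      obtain ⟨δ, hδ, hδb⟩ := Metric.isOpen_iff.1 isOpen_ball z1 hs
      set ρ := min ε δ / 2 with hρ
      have hmin : 0 < min ε δ := lt_min hε hδ
      have hρ0 : 0 < ρ := by positivity
      have h1 : ρ < ε := by have := min_le_left ε δ; linarith
      have h2 : ρ < δ := by have := min_le_right ε δ; linarith
      have hsub : ∀ t : ℝ, circleMap z1 ρ t ∈ closedBall c R := fun t =>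
        ball_subset_closedBall (hδb (by
          rw [mem_ball, dist_eq_norm]; simpa [circleMap, abs_of_pos hρ0] using h2))
      have hle : ∀ t, f (circleMap z1 ρ t) ≤ f z1 := fun t => by
        rw [hz1']; exact hmax (hsub t)
      have hlt : f (circleMap z1 ρ 0) < f z1 := by
        refine lt_of_le_of_ne (hle 0) fun h => ?_
        have := hre ⟨hsub 0, by simp [h, hz1']⟩
        simp [circleMap] at this
        linarith
      have hc : Continuous fun t => f (circleMap z1 ρ t) :=
        hf.comp_continuous (continuous_circleMap _ _) hsub
      have hint := intervalIntegral.integral_lt_integral_of_continuousOn_of_le_of_exists_lt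
        (f := fun t => f (circleMap z1 ρ t)) (g := fun _ => f z1) (a := 0) (b := 2 * Real.pi)
        Real.two_pi_pos hc.continuousOn continuousOn_const (fun t _ => hle t)
        ⟨0, by simp [Real.pi_pos.le], hlt⟩
      have h3 := hav ρ hρ0 h1
      rw [Real.circleAverage, smul_eq_mul] at h3
      rw [intervalIntegral.integral_const, smul_eq_mul] at hint
      rw [inv_mul_eq_iff_eq_mul₀ Real.two_pi_pos.ne'] at h3
      linarith
    · apply hM
      simp only [mem_closedBall, mem_ball, mem_sphere, not_lt] at *
      linarith
  intro z hz
  have : f z ≤ f z0 := hmax hz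
  linarith

theorem aux_trig (q : C(AddCircle (2 * Real.pi), ℂ))
    (hq : q ∈ Submodule.span ℂ (range (@fourier (2 * Real.pi)))) :
    ∃ P Q : ℂ → ℂ, Differentiable ℂ P ∧ Differentiable ℂ Q ∧
      ∀ x : ℝ, q (x : AddCircle (2 * Real.pi)) = P (exp (x * I)) + conj' (Q (exp (x * I))) := by
  induction hq using Submodule.span_induction with
  | mem x h =>
    obtain ⟨n, rfl⟩ := h
    have hpi : (2 * Real.pi : ℂ) ≠ 0 := by exact_mod_cast Real.two_pi_pos.ne'
    have hf : ∀ x : ℝ, fourier n (x : AddCircle (2 * Real.pi)) = exp (n * (x * I)) := by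
      intro x
      rw [fourier_coe_apply]
      congr 1
      push_cast
      have := Real.pi_pos.ne'
      field_simp
    obtain ⟨k, rfl | rfl⟩ := n.eq_nat_or_neg
    · refine ⟨fun z => z ^ k, fun _ => 0, by fun_prop, by fun_prop, fun x => ?_⟩
      rw [hf]; simp only [← Complex.exp_nat_mul]; simp
    · refine ⟨fun _ => 0, fun z => z ^ k, by fun_prop, by fun_prop, fun x => ?_⟩
      rw [hf]; simp only [← Complex.exp_nat_mul, ← Complex.exp_conj]; simp
  | zero => exact ⟨0, 0, by fun_prop, by fun_prop, by simp⟩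
  | add x y hx hy h1 h2 =>
    obtain ⟨P, Q, hP, hQ, h⟩ := h1
    obtain ⟨P', Q', hP', hQ', h'⟩ := h2
    refine ⟨P + P', Q + Q', by fun_prop, by fun_prop, fun t => ?_⟩
    simp [h, h']; ring
  | smul a x hx h1 =>
    obtain ⟨P, Q, hP, hQ, h⟩ := h1
    refine ⟨fun z => a * P z, fun z => conj' a * Q z, by fun_prop, by fun_prop, fun t => ?_⟩
    simp [h]; ring

theorem aux_approx (f : ℂ → ℝ) (c : ℂ) (R : ℝ) (hR : 0 < R)
    (hf : ContinuousOn f (closedBall c R)) (ε : ℝ) (hε : 0 < ε) :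
    ∃ P : ℂ → ℂ, Differentiable ℂ P ∧ ∀ z ∈ sphere c R, |f z - (P z).re| ≤ ε := by
  have : Fact (0 < 2 * Real.pi) := ⟨Real.two_pi_pos⟩
  let g : C(AddCircle (2 * Real.pi), ℂ) :=
    ⟨fun x => (f (c + R * (AddCircle.toCircle x : ℂ)) : ℂ), by
      refine Complex.continuous_ofReal.comp (hf.comp_continuous ?_ ?_)
      · have := (AddCircle.continuous_toCircle (T := 2 * Real.pi))
        fun_prop
      · intro x
        rw [mem_closedBall, dist_eq_norm]; simp [abs_of_pos hR, Circle.norm_coe]⟩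
  have hg : g ∈ (Submodule.span ℂ (range (@fourier (2 * Real.pi)))).topologicalClosure := by
    rw [span_fourier_closure_eq_top]; trivial
  have hg' : g ∈ closure ((Submodule.span ℂ (range (@fourier (2 * Real.pi)))) : Set C(AddCircle (2 * Real.pi), ℂ)) := hg
  obtain ⟨q, hq, hd⟩ := Metric.mem_closure_iff.1 hg' ε hε
  obtain ⟨P, Q, hP, hQ, h⟩ := aux_trig q hq
  refine ⟨fun z => P ((z - c) / R) + Q ((z - c) / R), by fun_prop, fun z hz => ?_⟩
  rw [← abs_of_pos hR, ← range_circleMap] at hz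
  obtain ⟨t, rfl⟩ := hz
  have h1 : dist (g t) (q t) ≤ ε := (ContinuousMap.dist_apply_le_dist _).trans hd.le
  have h2 : g (t : AddCircle (2 * Real.pi)) = (f (circleMap c R t) : ℂ) := by
    simp only [g, ContinuousMap.coe_mk, circleMap, AddCircle.toCircle_apply_mk, Circle.coe_exp]
    congr 5
    push_cast
    have : (Real.pi : ℂ) ≠ 0 := by exact_mod_cast Real.pi_pos.ne'
    field_simp
  have h3 : (circleMap c R t - c) / R = exp (t * I) := by
    have : (R : ℂ) ≠ 0 := by exact_mod_cast hR.ne'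
    simp [circleMap]; field_simp
  rw [h2, h, dist_eq_norm] at h1
  have h4 := (Complex.abs_re_le_norm _).trans h1
  simp only [h3]
  simpa using h4

theorem aux_entire_avg (P : ℂ → ℂ) (hP : Differentiable ℂ P) (z : ℂ) (ρ : ℝ) :
    Real.circleAverage (fun w => (P w).re) z ρ = (P z).re := by
  apply InnerProductSpace.HarmonicOnNhd.circleAverage_eq
  intro w _
  exact (hP.analyticAt w).harmonicAt_re

theorem aux_unif (f : ℂ → ℝ) (c : ℂ) (R : ℝ) (hR : 0 < R)
    (hf : ContinuousOn f (closedBall c R))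
    (hm : ∀ z ∈ ball c R, ∃ ε > 0, ∀ ρ, 0 < ρ → ρ < ε → Real.circleAverage f z ρ = f z)
    (ε : ℝ) (hε : 0 < ε) :
    ∃ P : ℂ → ℂ, Differentiable ℂ P ∧ (P c).im = 0 ∧
      ∀ z ∈ closedBall c R, |f z - (P z).re| ≤ ε := by
  obtain ⟨P, hP, hs⟩ := aux_approx f c R hR hf ε hε
  refine ⟨fun z => P z - (P c).im * I, by fun_prop, by simp, ?_⟩
  have hPc : Continuous P := hP.continuous
  have hint : ∀ z ∈ ball c R, ∃ ε > 0, ∀ ρ, 0 < ρ → ρ < ε →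
      (CircleIntegrable f z ρ ∧ Real.circleAverage f z ρ = f z) := by
    intro z hz
    obtain ⟨ε, hε, h⟩ := hm z hz
    obtain ⟨δ, hδ, hδb⟩ := Metric.isOpen_iff.1 isOpen_ball z hz
    refine ⟨min ε δ, lt_min hε hδ, fun ρ h0 h1 => ⟨?_, h ρ h0 (h1.trans_le (min_le_left _ _))⟩⟩
    apply ContinuousOn.circleIntegrable h0.le
    refine hf.mono fun w hw => ball_subset_closedBall (hδb ?_)
    rw [mem_sphere] at hw
    rw [mem_ball, hw]
    exact h1.trans_le (min_le_right _ _)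
  have hint2 : ∀ z ρ, CircleIntegrable (fun w => (P w).re) z ρ := fun z ρ =>
    Continuous.continuousOn (by fun_prop) |>.circleIntegrable'
  have h1 := aux_max (fun z => f z - (P z).re) c R ε hR (hf.sub (by fun_prop)) (by
    intro z hz
    obtain ⟨δ, hδ, h⟩ := hint z hz
    refine ⟨δ, hδ, fun ρ h0 h1 => ?_⟩
    rw [Real.circleAverage_fun_sub (h ρ h0 h1).1 (hint2 z ρ), (h ρ h0 h1).2, aux_entire_avg P hP])
    (fun z hz => (abs_le.1 (hs z hz)).2)
  have h2 := aux_max (fun z => (P z).re - f z) c R ε hR (ContinuousOn.sub (by fun_prop) hf) (by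
    intro z hz
    obtain ⟨δ, hδ, h⟩ := hint z hz
    refine ⟨δ, hδ, fun ρ h0 h1 => ?_⟩
    rw [Real.circleAverage_fun_sub (hint2 z ρ) (h ρ h0 h1).1, (h ρ h0 h1).2, aux_entire_avg P hP])
    (fun z hz => by linarith [(abs_le.1 (hs z hz)).1])
  intro z hz
  have := h1 z hz
  have := h2 z hz
  simp only [sub_re, mul_re, ofReal_re, ofReal_im, I_re, I_im]
  rw [abs_le]
  constructor <;> linarith

theorem aux_bc (D : ℂ → ℂ) (c : ℂ) (R ε : ℝ) (hR : 0 < R) (hε : 0 < ε) (hD : Differentiable ℂ D)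
    (h0 : (D c).im = 0) (hb : ∀ z ∈ closedBall c R, |(D z).re| ≤ ε) :
    ∀ z ∈ ball c (R / 2), ‖D z‖ ≤ 5 * ε := by
  intro z hz
  have hz' : ‖z - c‖ < R / 2 := by rwa [mem_ball, dist_eq_norm] at hz
  have h := borelCaratheodory (f := fun w => D (c + w)) (M := ε) (R := R) (z := z - c) hε
    (by fun_prop) (by
      intro w hw
      refine (abs_le.1 (hb _ ?_)).2
      rw [mem_ball, dist_zero_right] at hw
      rw [mem_closedBall, dist_eq_norm]; simpa using hw.le) hR
    (by rw [mem_ball, dist_zero_right]; linarith)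
  simp only [add_sub_cancel, add_zero] at h
  have hDc : ‖D c‖ ≤ ε := by
    have h1 : D c = ((D c).re : ℂ) := by apply Complex.ext <;> simp [h0]
    rw [h1, Complex.norm_real]
    exact hb c (mem_closedBall_self hR.le)
  have hpos : 0 < R - ‖z - c‖ := by linarith
  rw [← add_div, le_div_iff₀ hpos] at h
  have hn := norm_nonneg (z - c)
  have h5 : ‖D z‖ * (R - ‖z - c‖) ≤ (5 * ε) * (R - ‖z - c‖) := by
    have : ‖D c‖ * (R + ‖z - c‖) ≤ ε * (R + ‖z - c‖) := by gcongr
    nlinarith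
  exact le_of_mul_le_mul_right h5 hpos

theorem aux_hol (f : ℂ → ℝ) (c : ℂ) (R : ℝ) (hR : 0 < R)
    (hf : ContinuousOn f (closedBall c R))
    (hm : ∀ z ∈ ball c R, ∃ ε > 0, ∀ ρ, 0 < ρ → ρ < ε → Real.circleAverage f z ρ = f z) :
    ∃ F : ℂ → ℂ, DifferentiableOn ℂ F (ball c (R / 2)) ∧
      ∀ z ∈ ball c (R / 2), f z = (F z).re := by
  choose P hP hPc hPf using fun n : ℕ =>
    aux_unif f c R hR hf hm (1 / ((n : ℝ) + 1)) (by positivity)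
  have hsub : ball c (R / 2) ⊆ closedBall c R :=
    (ball_subset_ball (by linarith)).trans ball_subset_closedBall
  have hbd : ∀ n m : ℕ, ∀ z ∈ ball c (R / 2), ‖P n z - P m z‖ ≤
      5 * (1 / ((n : ℝ) + 1) + 1 / ((m : ℝ) + 1)) := by
    intro n m
    apply aux_bc (fun z => P n z - P m z) c R _ hR (by positivity)
      ((hP n).sub (hP m)) (by simp [hPc])
    intro z hz
    have h1 := abs_le.1 (hPf n z hz)
    have h2 := abs_le.1 (hPf m z hz)
    rw [sub_re, abs_le]
    constructor <;> linarith
  have hC : UniformCauchySeqOn P atTop (ball c (R / 2)) := by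
    rw [Metric.uniformCauchySeqOn_iff]
    intro ε hε
    obtain ⟨N, hN⟩ := exists_nat_one_div_lt (show 0 < ε / 10 by positivity)
    refine ⟨N, fun m hm n hn z hz => ?_⟩
    rw [dist_eq_norm]
    have h1 : 1 / ((m : ℝ) + 1) ≤ 1 / ((N : ℝ) + 1) := by gcongr
    have h2 : 1 / ((n : ℝ) + 1) ≤ 1 / ((N : ℝ) + 1) := by gcongr
    have := hbd m n z hz
    linarith
  have hlim : ∀ z, ∃ l, z ∈ ball c (R / 2) → Tendsto (fun n => P n z) atTop (𝓝 l) := by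
    intro z
    by_cases hz : z ∈ ball c (R / 2)
    · obtain ⟨l, hl⟩ := cauchySeq_tendsto_of_complete (hC.cauchySeq hz)
      exact ⟨l, fun _ => hl⟩
    · exact ⟨0, fun h => absurd h hz⟩
  choose F hF using hlim
  refine ⟨F, ?_, fun z hz => ?_⟩
  · exact (hC.tendstoUniformlyOn_of_tendsto hF).tendstoLocallyUniformlyOn.differentiableOn
      (Eventually.of_forall fun n => (hP n).differentiableOn) isOpen_ball
  · have h1 : Tendsto (fun n => (P n z).re) atTop (𝓝 (F z).re) :=
      (Complex.continuous_re.tendsto _).comp (hF z hz)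
    refine tendsto_nhds_unique ?_ h1
    rw [tendsto_iff_dist_tendsto_zero]
    refine squeeze_zero (fun _ => dist_nonneg) (fun n => ?_) tendsto_one_div_add_atTop_nhds_zero_nat
    rw [dist_comm, Real.dist_eq]
    exact hPf n z (hsub hz)

theorem aux_avg_conj (f : ℂ → ℝ) (z : ℂ) (ρ : ℝ) :
    Real.circleAverage (fun w => f (conj' w)) z ρ = Real.circleAverage f (conj' z) ρ := by
  unfold Real.circleAverage
  congr 1
  have h := intervalIntegral.integral_comp_sub_left (a := 0) (b := 2 * Real.pi)
    (fun t => f (circleMap (conj' z) ρ t)) (2 * Real.pi)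
  rw [sub_self, sub_zero] at h
  rw [← h]
  congr 1
  ext t
  congr 1
  simp only [circleMap, map_add, map_mul, conj_ofReal, ← Complex.exp_conj, conj_I]
  congr 2
  push_cast
  rw [show (2 * (Real.pi : ℂ) - t) * I = t * -I + 2 * Real.pi * I by ring,
    Complex.exp_periodic]

theorem aux_odd (w : ℂ → ℝ) (z : ℂ) : oddReflection w (conj' z) = - oddReflection w z := by
  unfold oddReflection
  simp only [conj_im, Complex.conj_conj]
  rcases lt_trichotomy z.im 0 with h | h | h
  · simp [h, h.le, not_lt.2 h.le]
  · simp [h]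
  · simp [h, not_lt.2 h.le]

theorem aux_odd_pos (w : ℂ → ℝ) (z : ℂ) (hz : z ∈ UHP) : oddReflection w z = w z := by
  have : 0 < z.im := hz
  simp [oddReflection, this]

theorem aux_isOpen : IsOpen UHP := isOpen_lt continuous_const Complex.continuous_im

theorem aux_cont (w : ℂ → ℝ) (a b : ℝ) (hw : HarmonicOnSet w UHP)
    (hb : ∀ x ∈ Set.Ioo a b, Tendsto w (nhdsWithin (x : ℂ) UHP) (nhds 0))
    (z : ℂ) (hz : z.im = 0 → z.re ∈ Ioo a b) : ContinuousAt (oddReflection w) z := by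
  have hup : ∀ z ∈ UHP, ContinuousAt (oddReflection w) z := by
    intro z hz
    have hn := aux_isOpen.mem_nhds hz
    refine (hw.1.continuousAt hn).congr ?_
    filter_upwards [hn] with y hy using (aux_odd_pos w y hy).symm
  rcases lt_trichotomy z.im 0 with h | h | h
  · have h1 : ContinuousAt (oddReflection w) (conj' z) := hup _ (by simpa [UHP] using h)
    have h2 : oddReflection w = fun z => - oddReflection w (conj' z) := by
      ext y; rw [aux_odd]; simp
    rw [h2]
    exact (ContinuousAt.comp (f := fun z => conj' z) h1 Complex.continuous_conj.continuousAt).neg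
  · have hx := hb _ (hz h)
    have hzx : ((z.re : ℝ) : ℂ) = z := by apply Complex.ext <;> simp [h]
    rw [hzx] at hx
    have h0 : oddReflection w z = 0 := by simp [oddReflection, h]
    rw [Metric.continuousAt_iff]
    rw [Metric.tendsto_nhdsWithin_nhds] at hx
    intro ε hε
    obtain ⟨δ, hδ, H⟩ := hx ε hε
    refine ⟨δ, hδ, fun y hy => ?_⟩
    rw [h0]
    rcases lt_trichotomy y.im 0 with h' | h' | h'
    · have h1 : conj' y ∈ UHP := by simpa [UHP] using h'
      have h2 : dist (conj' y) z < δ := by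
        have : conj' z = z := by rw [← hzx, conj_ofReal]
        rw [← this, Complex.dist_conj_conj]; exact hy
      have := H h1 h2
      rw [← aux_odd_pos w _ h1, aux_odd] at this
      simpa using this
    · simpa [oddReflection, h'] using hε
    · rw [aux_odd_pos w y h']
      exact H h' hy
  · exact hup z h

theorem aux_mvp (w : ℂ → ℝ) (hw : HarmonicOnSet w UHP) (z : ℂ) :
    ∃ ε > 0, ∀ ρ, 0 < ρ → ρ < ε →
      Real.circleAverage (oddReflection w) z ρ = oddReflection w z := by
  have hup : ∀ z ∈ UHP, ∀ ρ, 0 < ρ → ρ < z.im →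
      Real.circleAverage (oddReflection w) z ρ = oddReflection w z := by
    intro z hz ρ h0 h1
    have hsub : closedBall z ρ ⊆ UHP := by
      intro y hy
      rw [mem_closedBall, dist_eq_norm] at hy
      have := (Complex.abs_im_le_norm (y - z)).trans hy
      rw [sub_im, abs_le] at this
      change 0 < y.im
      linarith [this.1]
    rw [aux_odd_pos w z hz, hw.2 z hz ρ h0 hsub]
    rw [Real.circleAverage_congr_sphere (f₂ := w)]
    · rfl
    · intro y hy
      rw [abs_of_pos h0] at hy
      exact aux_odd_pos w y (hsub (sphere_subset_closedBall hy))
  have hodd : ∀ z ρ, Real.circleAverage (oddReflection w) (conj' z) ρ =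
      - Real.circleAverage (oddReflection w) z ρ := by
    intro z ρ
    rw [← aux_avg_conj]
    simp only [aux_odd]
    unfold Real.circleAverage
    simp
  rcases lt_trichotomy z.im 0 with h | h | h
  · refine ⟨-z.im, by linarith, fun ρ h0 h1 => ?_⟩
    have := hup (conj' z) (by simpa [UHP] using h) ρ h0 (by simpa using h1)
    rw [hodd, aux_odd] at this
    linarith
  · refine ⟨1, one_pos, fun ρ h0 h1 => ?_⟩
    have hc : conj' z = z := by apply Complex.ext <;> simp [h]
    have h2 := hodd z ρ
    have h3 := aux_odd w z
    rw [hc] at h2 h3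
    linarith
  · exact ⟨z.im, h, hup z h⟩

/-- Lower Harnack estimate. -/
theorem aux_harnack (F : ℂ → ℂ) (c : ℂ) (R : ℝ) (hR : 0 < R)
    (hF : ∀ z ∈ closedBall c R, AnalyticAt ℂ F z)
    (hpos : ∀ z ∈ closedBall c R, 0 ≤ (F z).re) (p : ℂ) (hp : p ∈ ball c R) :
    (R - ‖p - c‖) / (R + ‖p - c‖) * (F c).re ≤ (F p).re := by
  have hh : InnerProductSpace.HarmonicOnNhd (fun z => (F z).re) (closedBall c R) :=
    fun z hz => (hF z hz).harmonicAt_re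
  have h1 := hh.circleAverage_re_herglotzRieszKernel_smul hp
  have h2 := InnerProductSpace.HarmonicOnNhd.circleAverage_eq (f := fun z => (F z).re) (c := c)
    (R := R) (by rwa [abs_of_pos hR])
  have hc : ContinuousOn (fun z => (F z).re) (sphere c R) := fun z hz =>
    (Complex.continuous_re.continuousAt.comp
      (hF z (sphere_subset_closedBall hz)).continuousAt).continuousWithinAt
  set k := (R - ‖p - c‖) / (R + ‖p - c‖) with hk
  have h3 : Real.circleAverage (k • fun z => (F z).re) c R = k * (F c).re := by
    rw [Real.circleAverage_smul, h2, smul_eq_mul]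
  rw [← h3, ← h1]
  apply Real.circleAverage_mono
  · exact (hc.const_smul k).circleIntegrable hR.le
  · apply ContinuousOn.circleIntegrable hR.le
    have := continuousOn_herglotzRieszKernel_sphere hp
    rw [abs_of_pos hR] at this
    exact (Complex.continuous_re.comp_continuousOn this).smul hc
  · intro z hz
    rw [abs_of_pos hR] at hz
    have := le_re_herglotzRieszKernel hz hp
    simp only [Pi.smul_apply, Pi.smul_apply', smul_eq_mul, Function.comp]
    exact mul_le_mul_of_nonneg_right this (hpos z (sphere_subset_closedBall hz))

theorem aux_main (w : ℂ → ℝ) (a b : ℝ) (hw : HarmonicOnSet w UHP)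
    (hpos : ∀ z ∈ UHP, 0 < w z)
    (hb : ∀ x ∈ Set.Ioo a b, Tendsto w (nhdsWithin (x : ℂ) UHP) (nhds 0))
    (x : ℝ) (hx : x ∈ Ioo a b) :
    ∃ G : ℂ → ℂ, AnalyticAt ℂ G x ∧ (∀ᶠ z in 𝓝 (x : ℂ), oddReflection w z = (G z).re) ∧
      0 < (deriv G x * I).re := by
  obtain ⟨R, hR, h1, h2⟩ : ∃ R : ℝ, 0 < R ∧ a < x - R ∧ x + R < b := by
    refine ⟨min (x - a) (b - x) / 2, ?_, ?_, ?_⟩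
    · have : 0 < min (x - a) (b - x) := lt_min (by linarith [hx.1]) (by linarith [hx.2])
      positivity
    · have := min_le_left (x - a) (b - x); linarith [hx.1]
    · have := min_le_right (x - a) (b - x); linarith [hx.2]
  obtain ⟨F, hF, hFw⟩ := aux_hol (oddReflection w) x R hR (fun z hz =>
    (aux_cont w a b hw hb z (fun _ => by
      rw [mem_closedBall, dist_eq_norm] at hz
      have := (Complex.abs_re_le_norm _).trans hz
      rw [sub_re, ofReal_re, abs_le] at this
      exact ⟨by linarith [this.1], by linarith [this.2]⟩)).continuousWithinAt)
    (fun z _ => aux_mvp w hw z)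
  have hR2 : 0 < R / 2 := by positivity
  have hFa : ∀ z ∈ ball (x : ℂ) (R / 2), AnalyticAt ℂ F z := fun z hz =>
    hF.analyticAt (isOpen_ball.mem_nhds hz)
  have hFx := hFa x (mem_ball_self hR2)
  refine ⟨F, hFx, ?_, ?_⟩
  · filter_upwards [ball_mem_nhds (x : ℂ) hR2] with z hz using hFw z hz
  set r := R / 8 with hr
  have hr0 : 0 < r := by positivity
  set c : ℂ := x + r * I with hc
  have hcim : c.im = r := by simp [hc]
  have hsub : closedBall c r ⊆ ball (x : ℂ) (R / 2) := by
    intro z hz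
    rw [mem_closedBall] at hz
    rw [mem_ball]
    have : dist c x = r := by rw [dist_eq_norm]; simp [hc, abs_of_pos hr0]
    have := dist_triangle z c x
    linarith
  have hnn : ∀ z ∈ closedBall c r, 0 ≤ (F z).re := by
    intro z hz
    rw [← hFw z (hsub hz)]
    rw [mem_closedBall, dist_eq_norm] at hz
    have := (Complex.abs_im_le_norm _).trans hz
    rw [sub_im, abs_le, hcim] at this
    rcases lt_or_eq_of_le (show 0 ≤ z.im by linarith [this.1]) with h | h
    · rw [aux_odd_pos w z h]; exact (hpos z h).le
    · simp [oddReflection, ← h]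
  have hcpos : 0 < (F c).re := by
    have hcU : c ∈ UHP := by change 0 < c.im; rw [hcim]; exact hr0
    rw [← hFw c (hsub (mem_closedBall_self hr0.le)), aux_odd_pos w c hcU]
    exact hpos c hcU
  have hlow : ∀ y ∈ Ioo 0 r, y / (2 * r) * (F c).re ≤ (F (x + (y : ℂ) * I)).re := by
    intro y hy
    have hn : ‖(x + (y : ℂ) * I) - c‖ = r - y := by
      rw [hc, show (x + (y : ℂ) * I) - (x + r * I) = ((y - r : ℝ) : ℂ) * I by push_cast; ring,
        norm_mul, Complex.norm_real, norm_I, mul_one, Real.norm_eq_abs, abs_of_neg (by linarith [hy.2])]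
      ring
    have h := aux_harnack F c r hr0 (fun z hz => hFa z (hsub hz)) hnn (x + (y : ℂ) * I)
      (by rw [mem_ball, dist_eq_norm, hn]; linarith [hy.1])
    rw [hn] at h
    refine le_trans ?_ h
    refine mul_le_mul_of_nonneg_right ?_ hcpos.le
    rw [show r - (r - y) = y by ring]
    have := hy.1
    have := hy.2
    gcongr
    linarith
  have hd : HasDerivAt (fun y : ℝ => (F (x + (y : ℂ) * I)).re) (deriv F x * I).re 0 := by
    apply HasDerivAt.real_of_complex (e := fun y : ℂ => F (x + y * I))
    have h1 : HasDerivAt F (deriv F x) (x + ((0 : ℝ) : ℂ) * I) := by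
      simpa using hFx.differentiableAt.hasDerivAt
    have h2 : HasDerivAt (fun y : ℂ => (x : ℂ) + y * I) I ((0 : ℝ) : ℂ) := by
      simpa using ((hasDerivAt_id ((0 : ℝ) : ℂ)).mul_const I).const_add (x : ℂ)
    exact HasDerivAt.comp (h := fun y : ℂ => (x : ℂ) + y * I) ((0 : ℝ) : ℂ) h1 h2
  have hF0 : (F x).re = 0 := by
    rw [← hFw x (mem_ball_self hR2)]; simp [oddReflection]
  have ht := hd.tendsto_slope_zero_right
  have hge : (F c).re / (2 * r) ≤ (deriv F x * I).re := by
    refine ge_of_tendsto ht ?_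
    filter_upwards [Ioo_mem_nhdsGT hr0] with y hy
    have h := hlow y hy
    simp only [zero_add, ofReal_zero, zero_mul, add_zero, hF0, sub_zero, smul_eq_mul]
    rw [inv_mul_eq_div, le_div_iff₀ hy.1]
    refine le_trans (le_of_eq ?_) h
    ring
  exact lt_of_lt_of_le (by positivity) hge

theorem aux_deriv (w : ℂ → ℝ) (G : ℂ → ℂ) (x : ℝ) (hG : AnalyticAt ℂ G x)
    (h : ∀ᶠ z in 𝓝 (x : ℂ), oddReflection w z = (G z).re) :
    HasDerivAt (fun y : ℝ => oddReflection w ((x : ℂ) + (y : ℂ) * Complex.I))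
      (deriv G x * I).re 0 := by
  have hd : HasDerivAt (fun y : ℝ => (G (x + (y : ℂ) * I)).re) (deriv G x * I).re 0 := by
    apply HasDerivAt.real_of_complex (e := fun y : ℂ => G (x + y * I))
    have h1 : HasDerivAt G (deriv G x) (x + ((0 : ℝ) : ℂ) * I) := by
      simpa using hG.differentiableAt.hasDerivAt
    have h2 : HasDerivAt (fun y : ℂ => (x : ℂ) + y * I) I ((0 : ℝ) : ℂ) := by
      simpa using ((hasDerivAt_id ((0 : ℝ) : ℂ)).mul_const I).const_add (x : ℂ)
    exact HasDerivAt.comp (h := fun y : ℂ => (x : ℂ) + y * I) ((0 : ℝ) : ℂ) h1 h2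
  refine hd.congr_of_eventuallyEq ?_
  have hc : Tendsto (fun y : ℝ => (x : ℂ) + (y : ℂ) * I) (𝓝 0) (𝓝 (x : ℂ)) := by
    have : Continuous fun y : ℝ => (x : ℂ) + (y : ℂ) * I := by fun_prop
    simpa using this.tendsto 0
  exact hc.eventually h

theorem aux_analytic (w : ℂ → ℝ) (G : ℂ → ℂ) (x : ℝ) (hG : AnalyticAt ℂ G x)
    (h : ∀ᶠ z in 𝓝 (x : ℂ), oddReflection w z = (G z).re) :
    AnalyticAt ℝ (fun x : ℝ =>
      deriv (fun y : ℝ => oddReflection w ((x : ℂ) + (y : ℂ) * Complex.I)) 0) x := by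
  have h1 : AnalyticAt ℂ (fun z => deriv G z * I) (x : ℂ) := hG.deriv.mul analyticAt_const
  have h2 : AnalyticAt ℝ (fun t : ℝ => (deriv G (t : ℂ) * I).re) x := by
    have h3 : AnalyticAt ℝ (fun t : ℝ => deriv G (t : ℂ) * I) x :=
      AnalyticAt.comp (g := fun z : ℂ => deriv G z * I) (f := fun t : ℝ => (t : ℂ))
        h1.restrictScalars (Complex.ofRealCLM.analyticAt x)
    exact (Complex.reCLM.analyticAt _).comp h3
  refine h2.congr ?_
  have hev := h.eventually_nhds.and hG.eventually_analyticAt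
  filter_upwards [(Complex.continuous_ofReal.tendsto x).eventually hev] with t ht
  exact (aux_deriv w G t ht.2 ht.1).deriv.symm

/-- For positive harmonic `u, v` on `ℍ` vanishing continuously on `(a,b) ⊆ ℝ`,
the ratio `u/v` has a finite positive limit at each point of `(a,b)`, equal to
the ratio of the normal derivatives of the odd reflections, and this ratio is a
real analytic function of the boundary point. -/
theorem stmt_10 (u v : ℂ → ℝ) (a b : ℝ) (hab : a < b)
    (hu : HarmonicOnSet u UHP) (hv : HarmonicOnSet v UHP)
    (hupos : ∀ z ∈ UHP, 0 < u z) (hvpos : ∀ z ∈ UHP, 0 < v z)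
    (hubdry : ∀ x ∈ Set.Ioo a b, Tendsto u (nhdsWithin (x : ℂ) UHP) (nhds 0))
    (hvbdry : ∀ x ∈ Set.Ioo a b, Tendsto v (nhdsWithin (x : ℂ) UHP) (nhds 0)) :
    (∀ x ∈ Set.Ioo a b, ∃ du dv : ℝ, 0 < du ∧ 0 < dv ∧
      HasDerivAt (fun y : ℝ => oddReflection u ((x : ℂ) + (y : ℂ) * Complex.I)) du 0 ∧
      HasDerivAt (fun y : ℝ => oddReflection v ((x : ℂ) + (y : ℂ) * Complex.I)) dv 0 ∧
      Tendsto (fun y : ℝ => u ((x : ℂ) + (y : ℂ) * Complex.I) /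
          v ((x : ℂ) + (y : ℂ) * Complex.I))
        (𝓝[>] (0 : ℝ)) (nhds (du / dv))) ∧
    AnalyticOnNhd ℝ
      (fun x : ℝ =>
        deriv (fun y : ℝ => oddReflection u ((x : ℂ) + (y : ℂ) * Complex.I)) 0 /
        deriv (fun y : ℝ => oddReflection v ((x : ℂ) + (y : ℂ) * Complex.I)) 0)
      (Set.Ioo a b) := by
  refine ⟨fun x hx => ?_, fun x hx => ?_⟩
  · obtain ⟨G, hG, hGu, hGp⟩ := aux_main u a b hu hupos hubdry x hx
    obtain ⟨K, hK, hKv, hKp⟩ := aux_main v a b hv hvpos hvbdry x hx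
    have hdu := aux_deriv u G x hG hGu
    have hdv := aux_deriv v K x hK hKv
    refine ⟨_, _, hGp, hKp, hdu, hdv, ?_⟩
    have ht := hdu.tendsto_slope_zero_right.div hdv.tendsto_slope_zero_right hKp.ne'
    refine ht.congr' ?_
    filter_upwards [self_mem_nhdsWithin] with y hy
    have hy' : (0 : ℝ) < y := hy
    have hU : (x : ℂ) + (y : ℂ) * I ∈ UHP := by simpa [UHP] using hy'
    have h0 : ∀ w, oddReflection w ((x : ℂ) + ((0 : ℝ) : ℂ) * I) = 0 := by
      intro w; simp [oddReflection]
    simp only [Pi.div_apply, zero_add, h0, aux_odd_pos _ _ hU, sub_zero, smul_eq_mul]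
    rw [mul_div_mul_left _ _ (inv_ne_zero hy'.ne')]
  · obtain ⟨G, hG, hGu, hGp⟩ := aux_main u a b hu hupos hubdry x hx
    obtain ⟨K, hK, hKv, hKp⟩ := aux_main v a b hv hvpos hvbdry x hx
    refine (aux_analytic u G x hG hGu).div (aux_analytic v K x hK hKv) ?_
    rw [(aux_deriv v K x hK hKv).deriv]
    exact hKp.ne'
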